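/- arXiv:math-ph/0412009 — 2 statements merged into one kernel-verified Lean document; each statement's English description precedes it below -/
import Mathlib

section
/- Intermediate strengthening of strong subadditivity: Let ρ₁₂₃ be a density matrix on H₁⊗H₂⊗H₃ and let k^1,…,k^M be operators on H₁ with ∑_{α=1}^M k^{α*}k^α = id_{H₁}. Set n^α = Tr[(k^α⊗id₂₃) ρ₁₂₃ (k^{α*}⊗id₂₃)], and for each α with n^α > 0 set ρ₂₃^α = Tr₁[(k^α⊗id₂₃) ρ₁₂₃ (k^{α*}⊗id₂₃)]/n^α and ρ₂^α = Tr₃ ρ₂₃^α. Then S[ρ₁₂₃] − S[ρ₁₂] ≤ ∑_{α : n^α>0} n^α ( S[ρ₂₃^α] − S[ρ₂^α] ) ≤ S[ρ₂₃] − S[ρ₂]. -/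
open Matrix Kronecker Real
open scoped ComplexOrder

/-- Von Neumann entropy of a (Hermitian) matrix: the sum of `-λ ln λ` over its
eigenvalues, with the convention `0 ln 0 = 0`. -/
noncomputable def entropy {n : Type*} [Fintype n] [DecidableEq n]
    (A : Matrix n n ℂ) : ℝ :=
  if h : A.IsHermitian then ∑ i, Real.negMulLog (h.eigenvalues i) else 0

/-- Partial trace over the first factor of a twofold tensor product. -/
noncomputable def ptraceFst {m k : Type*} [Fintype m]
    (ρ : Matrix (m × k) (m × k) ℂ) : Matrix k k ℂ :=
  Matrix.of fun i j => ∑ a : m, ρ (a, i) (a, j)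

/-- Partial trace over the second factor of a twofold tensor product. -/
noncomputable def ptraceSnd {m k : Type*} [Fintype k]
    (ρ : Matrix (m × k) (m × k) ℂ) : Matrix m m ℂ :=
  Matrix.of fun i j => ∑ a : k, ρ (i, a) (j, a)

/-- Partial trace over the first factor of a threefold tensor product
(indexed as `(H₁ ⊗ H₂) ⊗ H₃`). -/
noncomputable def ptraceFst₃ {a b c : Type*} [Fintype a]
    (ρ : Matrix ((a × b) × c) ((a × b) × c) ℂ) : Matrix (b × c) (b × c) ℂ :=
  Matrix.of fun p q => ∑ i : a, ρ ((i, p.1), p.2) ((i, q.1), q.2)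


theorem mono_key {P : Type*} [Fintype P] (w a b : P → ℝ) (ha : ∀ p, 0 ≤ a p) (hb : ∀ p, 0 ≤ b p)
      (hs : ∀ p, b p = 0 → w p * a p = 0) :
      (∀ t : ℝ, 0 < t → HasDerivAt (fun t => ∑ p, w p * a p * (Real.log (b p + t * a p) - Real.log (a p)))
        (∑ p, w p * (a p ^ 2 / (b p + t * a p))) t) ∧
      Filter.Tendsto (fun t => ∑ p, w p * a p * (Real.log (b p + t * a p) - Real.log (a p))
        - (∑ p, w p * a p) * Real.log t) Filter.atTop (nhds 0) ∧
      Filter.Tendsto (fun t => ∑ p, w p * a p * (Real.log (b p + t * a p) - Real.log (a p)))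
        (nhdsWithin 0 (Set.Ioi 0)) (nhds (∑ p, w p * a p * (Real.log (b p) - Real.log (a p)))) := by
    refine ⟨?_, ?_, ?_⟩
    · intro t ht
      apply HasDerivAt.fun_sum
      intro p _
      rcases (ha p).eq_or_lt with h | h
      · rw [← h]; simpa using hasDerivAt_const t (0:ℝ)
      · have hpos : b p + t * a p ≠ 0 := by have := hb p; positivity
        have h1 : HasDerivAt (fun t => b p + t * a p) (a p) t := by
          simpa using ((hasDerivAt_id t).mul_const (a p)).const_add (b p)
        have h2 := ((h1.log hpos).sub_const (Real.log (a p))).const_mul (w p * a p)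
        have e : w p * (a p ^ 2 / (b p + t * a p)) = w p * a p * (a p / (b p + t * a p)) := by ring
        rw [e]; exact h2
    · have : ∀ p ∈ Finset.univ, Filter.Tendsto (fun t => w p * a p * (Real.log (b p + t * a p) - Real.log (a p))
        - (w p * a p) * Real.log t) Filter.atTop (nhds 0) := by
        intro p _
        rcases (ha p).eq_or_lt with h | h
        · rw [← h]; simp
        · have h1 : Filter.Tendsto (fun t => b p / a p * t⁻¹ + 1) Filter.atTop (nhds (1:ℝ)) := by
            simpa using (tendsto_inv_atTop_zero.const_mul (b p / a p)).add_const (1:ℝ)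
          have h2 := ((Real.continuousAt_log one_ne_zero).tendsto.comp h1).const_mul (w p * a p)
          simp only [Real.log_one, mul_zero] at h2
          refine h2.congr' ?_
          filter_upwards [Filter.eventually_gt_atTop 0] with t ht
          have hpos : 0 < b p + t * a p := by have := hb p; positivity
          have : b p / a p * t⁻¹ + 1 = (b p + t * a p) / a p / t := by field_simp
          simp only [Function.comp]
          rw [this, Real.log_div (by positivity) ht.ne', Real.log_div hpos.ne' h.ne']
          ring
      have h := tendsto_finsetSum _ this
      simpa [Finset.sum_sub_distrib, Finset.sum_mul] using h
    · apply tendsto_finsetSum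
      intro p _
      by_cases h0 : b p = 0
      · simp [hs p h0]
      · apply Filter.Tendsto.const_mul
        apply Filter.Tendsto.sub_const
        have h1 : Filter.Tendsto (fun t => b p + t * a p) (nhdsWithin 0 (Set.Ioi 0)) (nhds (b p)) := by
          have : ContinuousAt (fun t : ℝ => b p + t * a p) 0 := by fun_prop
          have := this.tendsto
          simp only [zero_mul, add_zero] at this
          exact this.mono_left nhdsWithin_le_nhds
        exact (Real.continuousAt_log h0).tendsto.comp h1

theorem mono_aux {P P' : Type*} [Fintype P] [Fintype P'] (w a b : P → ℝ) (w' a' b' : P' → ℝ)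
    (ha : ∀ p, 0 ≤ a p) (hb : ∀ p, 0 ≤ b p)
    (ha' : ∀ p, 0 ≤ a' p) (hb' : ∀ p, 0 ≤ b' p)
    (hs : ∀ p, b p = 0 → w p * a p = 0) (hs' : ∀ p, b' p = 0 → w' p * a' p = 0)
    (htr : ∑ p, w p * a p = ∑ p, w' p * a' p)
    (hq : ∀ t : ℝ, 0 < t → ∑ p, w' p * (a' p ^ 2 / (b' p + t * a' p)) ≤
      ∑ p, w p * (a p ^ 2 / (b p + t * a p))) :
    ∑ p, w' p * a' p * (Real.log (a' p) - Real.log (b' p)) ≤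
      ∑ p, w p * a p * (Real.log (a p) - Real.log (b p)) := by
  obtain ⟨d1, l1, z1⟩ := mono_key w a b ha hb hs
  obtain ⟨d2, l2, z2⟩ := mono_key w' a' b' ha' hb' hs'
  set F := fun t => ∑ p, w p * a p * (Real.log (b p + t * a p) - Real.log (a p)) with hF
  set F' := fun t => ∑ p, w' p * a' p * (Real.log (b' p + t * a' p) - Real.log (a' p)) with hF'
  have hd : ∀ t, 0 < t → HasDerivAt (fun t => F t - F' t) _ t := fun t ht => (d1 t ht).sub (d2 t ht)
  have hm : MonotoneOn (fun t => F t - F' t) (Set.Ioi 0) := by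
    apply monotoneOn_of_deriv_nonneg (convex_Ioi 0)
    · intro t ht; exact (hd t ht).continuousAt.continuousWithinAt
    · intro t ht; rw [interior_Ioi] at ht
      exact (hd t ht).differentiableAt.differentiableWithinAt
    · intro t ht; rw [interior_Ioi] at ht
      rw [(hd t ht).deriv]; linarith [hq t ht]
  have hl : Filter.Tendsto (fun t => F t - F' t) Filter.atTop (nhds 0) := by
    have := l1.sub l2
    rw [htr] at this
    simpa using this
  have hle : ∀ t, 0 < t → F t - F' t ≤ 0 := by
    intro t ht
    apply ge_of_tendsto hl
    filter_upwards [Filter.eventually_ge_atTop t] with s hs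
    exact hm ht (lt_of_lt_of_le ht hs) hs
  have := le_of_tendsto (z1.sub z2) (by
    filter_upwards [self_mem_nhdsWithin] with t ht using hle t ht)
  have e1 : ∑ p, w p * a p * (Real.log (b p) - Real.log (a p)) = - ∑ p, w p * a p * (Real.log (a p) - Real.log (b p)) := by
    rw [← Finset.sum_neg_distrib]; congr; ext; ring
  have e2 : ∑ p, w' p * a' p * (Real.log (b' p) - Real.log (a' p)) = - ∑ p, w' p * a' p * (Real.log (a' p) - Real.log (b' p)) := by
    rw [← Finset.sum_neg_distrib]; congr; ext; ring
  rw [e1, e2] at this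
  linarith

theorem diag_exists {N : Type*} [Fintype N] [DecidableEq N] {A : Matrix N N ℂ} (hA : A.PosSemidef) :
    ∃ (U : Matrix N N ℂ) (a : N → ℝ), U * Uᴴ = 1 ∧ Uᴴ * U = 1 ∧ (∀ i, 0 ≤ a i) ∧
      A = U * diagonal (fun i => (a i : ℂ)) * Uᴴ ∧ entropy A = ∑ i, Real.negMulLog (a i) := by
  refine ⟨hA.1.eigenvectorUnitary, hA.1.eigenvalues, ?_, ?_, hA.eigenvalues_nonneg, ?_, ?_⟩
  · exact Unitary.coe_mul_star_self hA.1.eigenvectorUnitary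
  · exact Unitary.coe_star_mul_self hA.1.eigenvectorUnitary
  · have := hA.1.spectral_theorem
    rw [Unitary.conjStarAlgAut_apply] at this
    exact this
  · simp [entropy, hA.1]

theorem entropy_diag {N : Type*} [Fintype N] [DecidableEq N] (U : Matrix N N ℂ) (a : N → ℝ)
    (h2 : Uᴴ * U = 1) :
    entropy (U * diagonal (fun i => (a i : ℂ)) * Uᴴ) = ∑ i, Real.negMulLog (a i) := by
  have hH : (U * diagonal (fun i => (a i : ℂ)) * Uᴴ).IsHermitian := by
    rw [Matrix.IsHermitian, conjTranspose_mul, conjTranspose_mul, diagonal_conjTranspose]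
    simp [Matrix.mul_assoc, Pi.star_def]
  rw [entropy, dif_pos hH]
  have h := hH.roots_charpoly_eq_eigenvalues
  rw [charpoly_mul_comm, ← Matrix.mul_assoc, h2, Matrix.one_mul, charpoly_diagonal, Polynomial.roots_prod _ _
    (by simp [Finset.prod_ne_zero_iff, Polynomial.X_sub_C_ne_zero])] at h
  have h' := congrArg (fun s : Multiset ℂ => (s.map (fun z => Real.negMulLog z.re)).sum) h
  simpa using h'.symm

theorem entropy_smul {N : Type*} [Fintype N] [DecidableEq N] {A : Matrix N N ℂ} (hA : A.PosSemidef)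
    (c : ℝ) : entropy ((c : ℂ) • A) = c * entropy A + Real.negMulLog c * A.trace.re := by
  obtain ⟨U, a, h1, h2, ha, hAe, hS⟩ := diag_exists hA
  have e : (c : ℂ) • A = U * diagonal (fun i => ((c * a i : ℝ) : ℂ)) * Uᴴ := by
    rw [hAe, ← Matrix.smul_mul, ← Matrix.mul_smul, ← diagonal_smul]
    congr 3; ext i; simp
  have ht : A.trace.re = ∑ i, a i := by
    rw [hAe, trace_mul_comm, ← Matrix.mul_assoc, h2, Matrix.one_mul, trace_diagonal]; simp
  rw [e, entropy_diag U _ h2, hS, ht, Finset.mul_sum, Finset.mul_sum, ← Finset.sum_add_distrib]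
  refine Finset.sum_congr rfl fun i _ => ?_
  rw [Real.negMulLog_mul]; ring

/-- The variational functional. -/
noncomputable def JJ {N : Type*} [Fintype N] (t : ℝ) (A B X : Matrix N N ℂ) : ℝ :=
  2 * (Xᴴ * A).trace.re - (X * Xᴴ * B).trace.re - t * (Xᴴ * X * A).trace.re

theorem JJ_diag {N : Type*} [Fintype N] [DecidableEq N] (U V x : Matrix N N ℂ) (a b : N → ℝ)
    (hU2 : Uᴴ * U = 1) (hV2 : Vᴴ * V = 1) (t : ℝ) :
    JJ t (U * diagonal (fun i => (a i : ℂ)) * Uᴴ) (V * diagonal (fun i => (b i : ℂ)) * Vᴴ) (V * x * Uᴴ) =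
     ∑ p : N × N, (2 * (star (x p.1 p.2) * (Vᴴ * U) p.1 p.2).re * a p.2 -
        (b p.1 + t * a p.2) * Complex.normSq (x p.1 p.2)) := by
  have e1 : ((V * x * Uᴴ)ᴴ * (U * diagonal (fun i => (a i : ℂ)) * Uᴴ)).trace =
      ∑ j, ∑ i, star (x j i) * (Vᴴ * U) j i * a i := by
    have : ((V * x * Uᴴ)ᴴ * (U * diagonal (fun i => (a i : ℂ)) * Uᴴ)).trace =
       (xᴴ * ((Vᴴ * U) * diagonal (fun i => (a i : ℂ)))).trace := by
      simp only [conjTranspose_mul, conjTranspose_conjTranspose, ← Matrix.mul_assoc]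
      rw [trace_mul_comm]
      simp only [← Matrix.mul_assoc, hU2, Matrix.one_mul]
    rw [this, trace, Finset.sum_comm]
    refine Finset.sum_congr rfl fun i _ => ?_
    rw [diag_apply, mul_apply]
    simp [mul_diagonal, mul_assoc]
  have e2 : ((V * x * Uᴴ) * (V * x * Uᴴ)ᴴ * (V * diagonal (fun i => (b i : ℂ)) * Vᴴ)).trace =
      ∑ j, ∑ i, (b j : ℂ) * (Complex.normSq (x j i) : ℂ) := by
    have : ((V * x * Uᴴ) * (V * x * Uᴴ)ᴴ * (V * diagonal (fun i => (b i : ℂ)) * Vᴴ)).trace =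
       ((x * xᴴ) * diagonal (fun i => (b i : ℂ))).trace := by
      simp only [conjTranspose_mul, conjTranspose_conjTranspose]
      rw [show V * x * Uᴴ * (U * (xᴴ * Vᴴ)) * (V * diagonal (fun i => (b i : ℂ)) * Vᴴ)
        = V * (x * (Uᴴ * U) * xᴴ * (Vᴴ * V) * diagonal (fun i => (b i : ℂ)) * Vᴴ) by simp only [Matrix.mul_assoc],
        trace_mul_comm, Matrix.mul_assoc _ Vᴴ V, hU2, hV2]
      simp only [Matrix.mul_one]
    rw [this, trace]
    refine Finset.sum_congr rfl fun i _ => ?_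
    rw [diag_apply, mul_diagonal, mul_apply, Finset.sum_mul]
    refine Finset.sum_congr rfl fun j _ => ?_
    rw [conjTranspose_apply, ← Complex.mul_conj]
    simp only [Complex.star_def]; ring
  have e3 : ((V * x * Uᴴ)ᴴ * (V * x * Uᴴ) * (U * diagonal (fun i => (a i : ℂ)) * Uᴴ)).trace =
      ∑ j, ∑ i, (a i : ℂ) * (Complex.normSq (x j i) : ℂ) := by
    have : ((V * x * Uᴴ)ᴴ * (V * x * Uᴴ) * (U * diagonal (fun i => (a i : ℂ)) * Uᴴ)).trace =
       ((xᴴ * x) * diagonal (fun i => (a i : ℂ))).trace := by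
      simp only [conjTranspose_mul, conjTranspose_conjTranspose]
      rw [show U * (xᴴ * Vᴴ) * (V * x * Uᴴ) * (U * diagonal (fun i => (a i : ℂ)) * Uᴴ)
        = U * (xᴴ * (Vᴴ * V) * x * (Uᴴ * U) * diagonal (fun i => (a i : ℂ)) * Uᴴ) by simp only [Matrix.mul_assoc],
        trace_mul_comm, Matrix.mul_assoc _ Uᴴ U, hU2, hV2]
      simp only [Matrix.mul_one]
    rw [this, trace, Finset.sum_comm]
    refine Finset.sum_congr rfl fun i _ => ?_
    rw [diag_apply, mul_diagonal, mul_apply, Finset.sum_mul]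
    refine Finset.sum_congr rfl fun j _ => ?_
    rw [conjTranspose_apply, ← Complex.mul_conj]
    simp only [Complex.star_def]; ring
  rw [JJ, e1, e2, e3, Fintype.sum_prod_type]
  simp only [Complex.re_sum, Finset.mul_sum, ← Finset.sum_sub_distrib, Complex.re_mul_ofReal, Complex.re_ofReal_mul,
    Complex.ofReal_re]
  refine Finset.sum_congr rfl fun j _ => Finset.sum_congr rfl fun i _ => ?_
  ring

theorem scalar_le (z c : ℂ) (a b t : ℝ) (ha : 0 ≤ a) (hb : 0 ≤ b) (ht : 0 < t) :
    2 * (star z * c).re * a - (b + t * a) * Complex.normSq z ≤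
      Complex.normSq c * (a ^ 2 / (b + t * a)) := by
  rcases ha.eq_or_lt with h | h
  · subst h; simp; have := Complex.normSq_nonneg z; positivity
  · have hp : 0 < b + t * a := by positivity
    rw [← mul_div_assoc, le_div_iff₀ hp]
    simp only [Complex.normSq_apply, Complex.star_def, Complex.mul_re, Complex.conj_re, Complex.conj_im]
    nlinarith [sq_nonneg ((b + t * a) * z.re - a * c.re), sq_nonneg ((b + t * a) * z.im - a * c.im)]

theorem scalar_eq (c : ℂ) (a b t : ℝ) (ha : 0 ≤ a) (hb : 0 ≤ b) (ht : 0 < t) :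
    2 * (star (((a / (b + t * a) : ℝ) : ℂ) * c) * c).re * a
       - (b + t * a) * Complex.normSq (((a / (b + t * a) : ℝ) : ℂ) * c) =
      Complex.normSq c * (a ^ 2 / (b + t * a)) := by
  rcases ha.eq_or_lt with h | h
  · subst h; simp
  · have hp : 0 < b + t * a := by positivity
    rw [Complex.normSq_mul, Complex.normSq_ofReal]
    have : star (((a / (b + t * a) : ℝ) : ℂ) * c) * c = ((a / (b + t * a) * Complex.normSq c : ℝ) : ℂ) := by
      rw [Complex.star_def, map_mul, Complex.conj_ofReal, mul_assoc, mul_comm _ c, Complex.mul_conj]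
      push_cast; rfl
    rw [this, Complex.ofReal_re]
    field_simp
    ring

theorem pair_data {m c : Type*} [Fintype m] [Fintype c] [DecidableEq m] [DecidableEq c]
    {σ : Matrix (m × c) (m × c) ℂ} (hσ : σ.PosSemidef) (hτ : (ptraceSnd σ).PosSemidef) :
    ∃ w a b : (m × c) × (m × c) → ℝ, (∀ p, 0 ≤ a p) ∧ (∀ p, 0 ≤ b p) ∧
      (∀ p, b p = 0 → w p * a p = 0) ∧ ∑ p, w p * a p = σ.trace.re ∧
      ∑ p, w p * a p * (Real.log (a p) - Real.log (b p)) = entropy (ptraceSnd σ) - entropy σ ∧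
      (∀ t, 0 < t → ∀ X, JJ t σ (ptraceSnd σ ⊗ₖ (1 : Matrix c c ℂ)) X ≤ ∑ p, w p * (a p ^ 2 / (b p + t * a p))) ∧
      (∀ t, 0 < t → ∃ X, JJ t σ (ptraceSnd σ ⊗ₖ (1 : Matrix c c ℂ)) X = ∑ p, w p * (a p ^ 2 / (b p + t * a p))) := by
  obtain ⟨U, a, hU1, hU2, ha, hAe, hS⟩ := diag_exists hσ
  obtain ⟨V0, b, hV01, hV02, hb, hBe, hS2⟩ := diag_exists hτ
  set V : Matrix (m × c) (m × c) ℂ := V0 ⊗ₖ 1 with hV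
  have hV1 : V * Vᴴ = 1 := by
    rw [hV, conjTranspose_kronecker, ← mul_kronecker_mul, hV01]; simp
  have hV2 : Vᴴ * V = 1 := by
    rw [hV, conjTranspose_kronecker, ← mul_kronecker_mul, hV02]; simp
  have hB : ptraceSnd σ ⊗ₖ (1 : Matrix c c ℂ) = V * diagonal (fun p : m × c => (b p.1 : ℂ)) * Vᴴ := by
    have : diagonal (fun p : m × c => (b p.1 : ℂ)) = diagonal (fun i => (b i : ℂ)) ⊗ₖ (1 : Matrix c c ℂ) := by
      rw [← diagonal_one, diagonal_kronecker_diagonal]; simp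
    rw [this, hV, conjTranspose_kronecker, ← mul_kronecker_mul, ← mul_kronecker_mul, ← hBe]; simp
  set C := Vᴴ * U with hC
  have hw1 : ∀ i, ∑ j, Complex.normSq (C j i) = 1 := by
    intro i
    have : Cᴴ * C = 1 := by
      rw [hC, conjTranspose_mul, conjTranspose_conjTranspose, Matrix.mul_assoc, ← Matrix.mul_assoc V, hV1, Matrix.one_mul, hU2]
    have := congrFun (congrFun this i) i
    rw [mul_apply, one_apply_eq] at this
    have h2 : ((∑ j, Complex.normSq (C j i) : ℝ) : ℂ) = 1 := by
      rw [← this]; push_cast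
      refine Finset.sum_congr rfl fun j _ => ?_
      rw [conjTranspose_apply, Complex.normSq_eq_conj_mul_self]; rfl
    exact_mod_cast h2
  have hd : ∀ j, ((∑ i, Complex.normSq (C j i) * a i : ℝ) : ℂ) = (Vᴴ * σ * V) j j := by
    intro j
    have : Vᴴ * σ * V = C * diagonal (fun i => (a i : ℂ)) * Cᴴ := by
      rw [hC, hAe, conjTranspose_mul, conjTranspose_conjTranspose]; simp only [Matrix.mul_assoc]
    rw [this, mul_apply]; push_cast
    refine Finset.sum_congr rfl fun i _ => ?_
    rw [conjTranspose_apply, mul_diagonal, ← Complex.mul_conj]; simp only [Complex.star_def]; ring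
  have hbk : ∀ j, ∑ k, ∑ i, Complex.normSq (C (j, k) i) * a i = b j := by
    intro j
    have h1 : V0ᴴ * ptraceSnd σ * V0 = diagonal (fun i => (b i : ℂ)) := by
      rw [hBe, show V0ᴴ * (V0 * diagonal (fun i => (b i : ℂ)) * V0ᴴ) * V0 = (V0ᴴ * V0) * diagonal (fun i => (b i : ℂ)) * (V0ᴴ * V0)
        by simp only [Matrix.mul_assoc], hV02]; simp
    have h2 : ((∑ k, ∑ i, Complex.normSq (C (j, k) i) * a i : ℝ) : ℂ) = b j := by
      rw [Complex.ofReal_sum, Finset.sum_congr rfl fun k _ => hd (j, k)]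
      have h3 := congrFun (congrFun h1 j) j
      rw [diagonal_apply_eq] at h3
      rw [← h3]
      simp only [mul_apply, hV, conjTranspose_apply, kroneckerMap_apply, one_apply, ptraceSnd, of_apply, Fintype.sum_prod_type]
      simp only [mul_ite, mul_one, mul_zero, ite_mul, zero_mul, apply_ite star, star_zero, Finset.sum_ite_eq,
        Finset.sum_ite_eq', Finset.mem_univ, if_true, Finset.mul_sum, Finset.sum_mul]
      rw [Finset.sum_comm]
      refine Finset.sum_congr rfl fun x _ => ?_
      rw [Finset.sum_comm]
    exact_mod_cast h2
  refine ⟨fun p => Complex.normSq (C p.1 p.2), fun p => a p.2, fun p => b p.1.1, fun p => ha _, fun p => hb _,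
    ?_, ?_, ?_, ?_, ?_⟩
  · rintro ⟨⟨j, k⟩, i⟩ h0
    have h0 : b j = 0 := h0
    have h := hbk j
    rw [h0] at h
    have hnn : ∀ k i, 0 ≤ Complex.normSq (C (j, k) i) * a i := fun k i => mul_nonneg (Complex.normSq_nonneg _) (ha i)
    rw [Finset.sum_eq_zero_iff_of_nonneg fun k _ => Finset.sum_nonneg fun i _ => hnn k i] at h
    have h := h k (Finset.mem_univ _)
    rw [Finset.sum_eq_zero_iff_of_nonneg fun i _ => hnn k i] at h
    exact h i (Finset.mem_univ _)
  · have ht : σ.trace.re = ∑ i, a i := by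
      rw [hAe, trace_mul_comm, ← Matrix.mul_assoc, hU2, Matrix.one_mul, trace_diagonal]; simp
    rw [ht, Fintype.sum_prod_type, Finset.sum_comm]
    refine Finset.sum_congr rfl fun i _ => ?_
    simp only []
    rw [← Finset.sum_mul, hw1, one_mul]
  · simp only [mul_sub, Finset.sum_sub_distrib]
    have h1 : ∑ p : (m × c) × (m × c), Complex.normSq (C p.1 p.2) * a p.2 * Real.log (a p.2) = - entropy σ := by
      rw [hS, Fintype.sum_prod_type, Finset.sum_comm, ← Finset.sum_neg_distrib]
      refine Finset.sum_congr rfl fun i _ => ?_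
      simp only []
      rw [← Finset.sum_mul, ← Finset.sum_mul, hw1, Real.negMulLog]; ring
    have h2 : ∑ p : (m × c) × (m × c), Complex.normSq (C p.1 p.2) * a p.2 * Real.log (b p.1.1) = - entropy (ptraceSnd σ) := by
      rw [hS2, Fintype.sum_prod_type, Fintype.sum_prod_type, ← Finset.sum_neg_distrib]
      refine Finset.sum_congr rfl fun j _ => ?_
      simp only [← Finset.sum_mul]
      rw [hbk, Real.negMulLog]; ring
    rw [h1, h2]; ring
  · intro t ht X
    have hX : X = V * (Vᴴ * X * U) * Uᴴ := by
      rw [show V * (Vᴴ * X * U) * Uᴴ = (V * Vᴴ) * X * (U * Uᴴ) by simp only [Matrix.mul_assoc], hV1, hU1]; simp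
    rw [hB, hX]
    conv_lhs => rw [hAe]
    rw [JJ_diag _ _ _ _ _ hU2 hV2]
    exact Finset.sum_le_sum fun p _ => scalar_le _ _ _ _ _ (ha _) (hb _) ht
  · intro t ht
    refine ⟨V * (Matrix.of fun j i => ((a i / (b j.1 + t * a i) : ℝ) : ℂ) * C j i) * Uᴴ, ?_⟩
    rw [hB]
    conv_lhs => rw [hAe]
    rw [JJ_diag _ _ _ _ _ hU2 hV2]
    exact Finset.sum_congr rfl fun p _ => scalar_eq _ _ _ _ (ha _) (hb _) ht

/-- `1 ⊗ Y`. -/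
noncomputable def liftE {a b c : Type*} [DecidableEq a] (Y : Matrix (b × c) (b × c) ℂ) :
    Matrix ((a × b) × c) ((a × b) × c) ℂ :=
  Matrix.of fun p q => if p.1.1 = q.1.1 then Y (p.1.2, p.2) (q.1.2, q.2) else 0

section
variable {a b c : Type*} [Fintype a] [Fintype b] [Fintype c] [DecidableEq a] [DecidableEq b] [DecidableEq c]

theorem liftE_trace (Y : Matrix (b × c) (b × c) ℂ) (Z : Matrix ((a × b) × c) ((a × b) × c) ℂ) :
    (liftE Y * Z).trace = (Y * ptraceFst₃ Z).trace := by
  simp only [trace, diag_apply, mul_apply, liftE, ptraceFst₃, of_apply, Fintype.sum_prod_type, ite_mul, zero_mul,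
    Finset.mul_sum]
  have : ∀ (x : a) (x1 : b) (x2 : c), (∑ x_3 : a, ∑ x_4 : b, ∑ x_5 : c,
      if x = x_3 then Y (x1, x2) (x_4, x_5) * Z ((x_3, x_4), x_5) ((x, x1), x2) else 0) =
      ∑ x_4 : b, ∑ x_5 : c, Y (x1, x2) (x_4, x_5) * Z ((x, x_4), x_5) ((x, x1), x2) := by
    intro x x1 x2
    rw [Finset.sum_eq_single x]
    · simp
    · intro y _ hy; simp [hy.symm]
    · simp
  simp only [this]
  rw [Finset.sum_comm]
  refine Finset.sum_congr rfl fun x1 _ => ?_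
  rw [Finset.sum_comm]
  refine Finset.sum_congr rfl fun x2 _ => ?_
  rw [Finset.sum_comm]
  refine Finset.sum_congr rfl fun x3 _ => ?_
  rw [Finset.sum_comm]

theorem liftE_mul (Y Z : Matrix (b × c) (b × c) ℂ) :
    (liftE (Y * Z) : Matrix ((a × b) × c) ((a × b) × c) ℂ) = liftE Y * liftE Z := by
  ext ⟨⟨x, y⟩, z⟩ ⟨⟨x', y'⟩, z'⟩
  simp only [mul_apply, liftE, of_apply, Fintype.sum_prod_type]
  rw [Finset.sum_eq_single x]
  · by_cases h : x = x' <;> simp [h]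
  · intro y _ hy; simp [hy.symm]
  · simp

theorem liftE_conj (Y : Matrix (b × c) (b × c) ℂ) :
    (liftE Yᴴ : Matrix ((a × b) × c) ((a × b) × c) ℂ) = (liftE Y)ᴴ := by
  ext ⟨⟨x, y⟩, z⟩ ⟨⟨x', y'⟩, z'⟩
  simp only [conjTranspose_apply, liftE, of_apply]
  by_cases h : x = x'
  · simp [h]
  · simp [h, Ne.symm h]

/-- `k ⊗ 1 ⊗ 1`. -/
noncomputable def KK (b c : Type*) [DecidableEq b] [DecidableEq c] (k : Matrix a a ℂ) :
    Matrix ((a × b) × c) ((a × b) × c) ℂ := (k ⊗ₖ (1 : Matrix b b ℂ)) ⊗ₖ (1 : Matrix c c ℂ)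

theorem KK_conj (k : Matrix a a ℂ) : KK b c kᴴ = (KK b c k)ᴴ := by
  simp [KK, conjTranspose_kronecker]

theorem KK_mul (k l : Matrix a a ℂ) : KK b c (k * l) = KK b c k * KK b c l := by
  simp [KK, ← mul_kronecker_mul]

theorem KK_comm (k : Matrix a a ℂ) (Y : Matrix (b × c) (b × c) ℂ) :
    liftE Y * KK b c k = KK b c k * liftE Y := by
  ext ⟨⟨x, y⟩, z⟩ ⟨⟨x', y'⟩, z'⟩
  simp only [mul_apply, liftE, KK, kroneckerMap_apply, one_apply, of_apply, Fintype.sum_prod_type]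
  rw [Finset.sum_eq_single x, Finset.sum_eq_single x']
  · simp [mul_comm]
  · intro y _ hy; simp [hy]
  · simp
  · intro y _ hy; simp [hy.symm]
  · simp

theorem ptr_kron (Z : Matrix ((a × b) × c) ((a × b) × c) ℂ) :
    ptraceSnd (ptraceFst₃ Z) ⊗ₖ (1 : Matrix c c ℂ) = ptraceFst₃ (ptraceSnd Z ⊗ₖ (1 : Matrix c c ℂ)) := by
  ext ⟨y, z⟩ ⟨y', z'⟩
  simp only [ptraceSnd, ptraceFst₃, kroneckerMap_apply, of_apply, Finset.sum_mul]
  rw [Finset.sum_comm]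

theorem ptr_KK (k l : Matrix a a ℂ) (Z : Matrix ((a × b) × c) ((a × b) × c) ℂ) :
    ptraceSnd (KK b c k * Z * KK b c l) ⊗ₖ (1 : Matrix c c ℂ) =
      KK b c k * (ptraceSnd Z ⊗ₖ (1 : Matrix c c ℂ)) * KK b c l := by
  have : ∀ (L R : Matrix (a × b) (a × b) ℂ), ptraceSnd ((L ⊗ₖ (1 : Matrix c c ℂ)) * Z * (R ⊗ₖ (1 : Matrix c c ℂ))) =
      L * ptraceSnd Z * R := by
    intro L R
    ext x y
    simp only [mul_apply, kroneckerMap_apply, one_apply, ptraceSnd, of_apply,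
      Fintype.sum_prod_type (α₁ := a × b) (α₂ := c)]
    simp only [mul_ite, mul_one, mul_zero, ite_mul, zero_mul, Finset.sum_ite_eq,
        Finset.sum_ite_eq', Finset.mem_univ, if_true, Finset.mul_sum, Finset.sum_mul]
    rw [Finset.sum_comm]
    refine Finset.sum_congr rfl fun x _ => ?_
    rw [Finset.sum_comm]
  rw [KK, KK, this, ← mul_kronecker_mul, ← mul_kronecker_mul]; simp

theorem JJ_lift (t : ℝ) (A B : Matrix ((a × b) × c) ((a × b) × c) ℂ) (Y : Matrix (b × c) (b × c) ℂ) :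
    JJ t (ptraceFst₃ A) (ptraceFst₃ B) Y = JJ t A B (liftE Y) := by
  simp only [JJ, ← liftE_conj, ← liftE_mul, liftE_trace]

theorem ptraceFst₃_psd {Z : Matrix ((a × b) × c) ((a × b) × c) ℂ} (hZ : Z.PosSemidef) :
    (ptraceFst₃ Z).PosSemidef := by
  have : ptraceFst₃ Z = ∑ i, Z.submatrix (fun p : b × c => ((i, p.1), p.2)) (fun p : b × c => ((i, p.1), p.2)) := by
    ext p q; simp [ptraceFst₃, Matrix.sum_apply]
  rw [this]
  exact posSemidef_sum _ fun i _ => hZ.submatrix _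

theorem ptraceSnd_psd {Z : Matrix (a × c) (a × c) ℂ} (hZ : Z.PosSemidef) :
    (ptraceSnd Z).PosSemidef := by
  have : ptraceSnd Z = ∑ i, Z.submatrix (fun p : a => (p, i)) (fun p : a => (p, i)) := by
    ext p q; simp [ptraceSnd, Matrix.sum_apply]
  rw [this]
  exact posSemidef_sum _ fun i _ => hZ.submatrix _

theorem ptraceFst₃_trace (Z : Matrix ((a × b) × c) ((a × b) × c) ℂ) :
    (ptraceFst₃ Z).trace = Z.trace := by
  have := liftE_trace (1 : Matrix (b × c) (b × c) ℂ) Z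
  rw [Matrix.one_mul] at this
  rw [← this]
  have : (liftE (1 : Matrix (b × c) (b × c) ℂ) : Matrix ((a × b) × c) ((a × b) × c) ℂ) = 1 := by
    ext ⟨⟨x, y⟩, z⟩ ⟨⟨x', y'⟩, z'⟩
    simp only [liftE, of_apply, one_apply, Prod.mk.injEq]
    split_ifs <;> simp_all
  rw [this, Matrix.one_mul]
end

theorem schwarz {N : Type*} [Fintype N] [DecidableEq N] {M : ℕ} (K Z : Fin M → Matrix N N ℂ)
    (hK : ∑ i, (K i)ᴴ * K i = 1) {B : Matrix N N ℂ} (hB : B.PosSemidef) (X : Matrix N N ℂ)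
    (hX : X = ∑ i, (K i)ᴴ * Z i * K i) :
    (X * Xᴴ * B).trace.re ≤ ∑ i, (Z i * (Z i)ᴴ * (K i * B * (K i)ᴴ)).trace.re := by
  have h1 : ∑ i, ((K i)ᴴ * Z i - X * (K i)ᴴ) * ((K i)ᴴ * Z i - X * (K i)ᴴ)ᴴ =
      ∑ i, (K i)ᴴ * (Z i * (Z i)ᴴ) * K i - X * Xᴴ := by
    have e : ∀ i, ((K i)ᴴ * Z i - X * (K i)ᴴ) * ((K i)ᴴ * Z i - X * (K i)ᴴ)ᴴ =
       (K i)ᴴ * (Z i * (Z i)ᴴ) * K i - ((K i)ᴴ * Z i * K i) * Xᴴ - X * ((K i)ᴴ * Z i * K i)ᴴ + X * ((K i)ᴴ * K i) * Xᴴ := by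
      intro i
      simp only [conjTranspose_sub, conjTranspose_mul, conjTranspose_conjTranspose, Matrix.mul_sub, Matrix.sub_mul, Matrix.mul_assoc]
      abel
    simp only [e, Finset.sum_add_distrib, Finset.sum_sub_distrib, ← Finset.sum_mul, ← Finset.mul_sum, hK, ← conjTranspose_sum, ← hX]
    simp
  have h2 : 0 ≤ ((∑ i, ((K i)ᴴ * Z i - X * (K i)ᴴ) * ((K i)ᴴ * Z i - X * (K i)ᴴ)ᴴ) * B).trace.re := by
    rw [Finset.sum_mul, trace_sum, Complex.re_sum]
    refine Finset.sum_nonneg fun i _ => ?_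
    rw [Matrix.mul_assoc, trace_mul_comm]
    exact (Complex.le_def.1 (hB.conjTranspose_mul_mul_same ((K i)ᴴ * Z i - X * (K i)ᴴ)).trace_nonneg).1
  rw [h1, Matrix.sub_mul, trace_sub, Complex.sub_re, Finset.sum_mul, trace_sum, Complex.re_sum] at h2
  have h3 : ∀ i, ((K i)ᴴ * (Z i * (Z i)ᴴ) * K i * B).trace = (Z i * (Z i)ᴴ * (K i * B * (K i)ᴴ)).trace := by
    intro i
    rw [Matrix.mul_assoc, Matrix.mul_assoc, trace_mul_comm]; simp only [Matrix.mul_assoc]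
  simp only [h3] at h2
  linarith

theorem JJ_mono {N : Type*} [Fintype N] [DecidableEq N] {M : ℕ} (K Z : Fin M → Matrix N N ℂ)
    (hK : ∑ i, (K i)ᴴ * K i = 1) {A B : Matrix N N ℂ} (hA : A.PosSemidef) (hB : B.PosSemidef) (t : ℝ) (ht : 0 < t) :
    ∑ i, JJ t (K i * A * (K i)ᴴ) (K i * B * (K i)ᴴ) (Z i) ≤ JJ t A B (∑ i, (K i)ᴴ * Z i * K i) := by
  have h1 := schwarz K Z hK hB _ rfl
  have h2 := schwarz K (fun i => (Z i)ᴴ) hK hA (∑ i, (K i)ᴴ * Z i * K i)ᴴ (by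
    simp [conjTranspose_sum, Matrix.mul_assoc])
  simp only [conjTranspose_conjTranspose] at h2
  have h3 : ((∑ i, (K i)ᴴ * Z i * K i)ᴴ * A).trace.re = ∑ i, ((Z i)ᴴ * (K i * A * (K i)ᴴ)).trace.re := by
    rw [conjTranspose_sum, Finset.sum_mul, trace_sum, Complex.re_sum]
    refine Finset.sum_congr rfl fun i _ => ?_
    simp only [conjTranspose_mul, conjTranspose_conjTranspose]
    rw [Matrix.mul_assoc, trace_mul_comm]; simp only [Matrix.mul_assoc]
  simp only [JJ, Finset.sum_sub_distrib, ← Finset.mul_sum]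
  rw [h3]
  have := mul_le_mul_of_nonneg_left h2 ht.le
  linarith

theorem JJ_lin {N : Type*} [Fintype N] [DecidableEq N] {M : ℕ} (K : Fin M → Matrix N N ℂ)
    (hK : ∑ i, (K i)ᴴ * K i = 1) (A B X : Matrix N N ℂ) (hc : ∀ i, X * K i = K i * X)
    (hc' : ∀ i, Xᴴ * K i = K i * Xᴴ) (t : ℝ) :
    JJ t A B X = ∑ i, JJ t (K i * A * (K i)ᴴ) (K i * B * (K i)ᴴ) X := by
  have h : ∀ W C : Matrix N N ℂ, (∀ i, W * K i = K i * W) →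
      ∑ i, (W * (K i * C * (K i)ᴴ)).trace.re = (W * C).trace.re := by
    intro W C hW
    have : ∀ i, (W * (K i * C * (K i)ᴴ)).trace = ((K i)ᴴ * K i * (W * C)).trace := by
      intro i
      rw [← Matrix.mul_assoc, trace_mul_comm, ← Matrix.mul_assoc W, hW]
      simp only [Matrix.mul_assoc]
    simp only [this]
    rw [← Complex.re_sum, ← trace_sum, ← Finset.sum_mul, hK, Matrix.one_mul]
  simp only [JJ, Finset.sum_sub_distrib, ← Finset.mul_sum]
  rw [h _ _ hc', h, h]
  · intro i; rw [Matrix.mul_assoc, hc, ← Matrix.mul_assoc, hc', Matrix.mul_assoc]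
  · intro i; rw [Matrix.mul_assoc, hc', ← Matrix.mul_assoc, hc, Matrix.mul_assoc]

theorem core {n₁ n₂ n₃ : Type*} [Fintype n₁] [Fintype n₂] [Fintype n₃]
    [DecidableEq n₁] [DecidableEq n₂] [DecidableEq n₃] {M : ℕ}
    (ρ : Matrix ((n₁ × n₂) × n₃) ((n₁ × n₂) × n₃) ℂ)
    (hρ : ρ.PosSemidef) (k : Fin M → Matrix n₁ n₁ ℂ)
    (hk : ∑ α, (k α)ᴴ * k α = 1)
    (σ : Fin M → Matrix (n₂ × n₃) (n₂ × n₃) ℂ)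
    (hσ : ∀ α, σ α = ptraceFst₃ (KK n₂ n₃ (k α) * ρ * (KK n₂ n₃ (k α))ᴴ)) :
    entropy ρ - entropy (ptraceSnd ρ) ≤ ∑ α, (entropy (σ α) - entropy (ptraceSnd (σ α))) ∧
    ∑ α, (entropy (σ α) - entropy (ptraceSnd (σ α))) ≤
      entropy (ptraceFst₃ ρ) - entropy (ptraceSnd (ptraceFst₃ ρ)) := by
  have hσp : ∀ α, (σ α).PosSemidef := fun α => by
    rw [hσ]; exact ptraceFst₃_psd (hρ.mul_mul_conjTranspose_same _)
  have hK : ∑ α, (KK n₂ n₃ (k α))ᴴ * KK n₂ n₃ (k α) = 1 := by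
    simp only [← KK_conj, ← KK_mul]
    have : ∑ α, KK n₂ n₃ ((k α)ᴴ * k α) = KK n₂ n₃ (∑ α, (k α)ᴴ * k α) := by
      ext p q
      simp [KK, Matrix.sum_apply, Finset.sum_mul]
    rw [this, hk]; simp [KK]
  have hB : (ptraceSnd ρ ⊗ₖ (1 : Matrix n₃ n₃ ℂ)).PosSemidef :=
    (ptraceSnd_psd hρ).kronecker Matrix.PosSemidef.one
  have hJ : ∀ t α Y, JJ t (σ α) (ptraceSnd (σ α) ⊗ₖ (1 : Matrix n₃ n₃ ℂ)) Y =
      JJ t (KK n₂ n₃ (k α) * ρ * (KK n₂ n₃ (k α))ᴴ)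
        (KK n₂ n₃ (k α) * (ptraceSnd ρ ⊗ₖ (1 : Matrix n₃ n₃ ℂ)) * (KK n₂ n₃ (k α))ᴴ) (liftE Y) := by
    intro t α Y
    rw [hσ, ptr_kron, JJ_lift, ← KK_conj, ptr_KK]
  have hJ2 : ∀ t Y, JJ t (ptraceFst₃ ρ) (ptraceSnd (ptraceFst₃ ρ) ⊗ₖ (1 : Matrix n₃ n₃ ℂ)) Y =
      ∑ α, JJ t (σ α) (ptraceSnd (σ α) ⊗ₖ (1 : Matrix n₃ n₃ ℂ)) Y := by
    intro t Y
    simp only [hJ]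
    rw [ptr_kron, JJ_lift, ← JJ_lin _ hK]
    · intro i; exact KK_comm _ _
    · intro i; rw [← liftE_conj]; exact KK_comm _ _
  have htr : ∑ α, (σ α).trace.re = ρ.trace.re := by
    have h : ∀ α, (σ α).trace = ((KK n₂ n₃ (k α))ᴴ * KK n₂ n₃ (k α) * ρ).trace := fun α => by
      rw [hσ, ptraceFst₃_trace, trace_mul_comm, Matrix.mul_assoc]
    simp only [h]
    rw [← Complex.re_sum, ← trace_sum, ← Finset.sum_mul, hK, Matrix.one_mul]
  obtain ⟨w1, a1, b1, ha1, hb1, hs1, ht1, hS1, hle1, hex1⟩ := pair_data hρ (ptraceSnd_psd hρ)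
  obtain ⟨w3, a3, b3, ha3, hb3, hs3, ht3, hS3, hle3, hex3⟩ :=
    pair_data (ptraceFst₃_psd hρ) (ptraceSnd_psd (ptraceFst₃_psd hρ))
  choose w2 a2 b2 ha2 hb2 hs2 ht2 hS2 hle2 hex2 using fun α => pair_data (hσp α) (ptraceSnd_psd (hσp α))
  constructor
  · have := mono_aux w1 a1 b1 (fun p : Fin M × _ => w2 p.1 p.2) (fun p => a2 p.1 p.2) (fun p => b2 p.1 p.2)
      ha1 hb1 (fun p => ha2 _ _) (fun p => hb2 _ _) hs1 (fun p => hs2 _ _)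
      (by rw [Fintype.sum_prod_type (α₁ := Fin M)]; simp only [ht2]; rw [ht1, htr])
      (by
        intro t ht
        rw [Fintype.sum_prod_type (α₁ := Fin M)]
        choose Y hY using fun α => hex2 α t ht
        simp only [← hY, hJ]
        exact (JJ_mono _ _ hK hρ hB t ht).trans (hle1 t ht _))
    rw [Fintype.sum_prod_type (α₁ := Fin M)] at this
    simp only [hS2, Finset.sum_sub_distrib] at this
    rw [hS1] at this
    rw [Finset.sum_sub_distrib]; linarith
  · have := mono_aux (fun p : Fin M × _ => w2 p.1 p.2) (fun p => a2 p.1 p.2) (fun p => b2 p.1 p.2) w3 a3 b3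
      (fun p => ha2 _ _) (fun p => hb2 _ _) ha3 hb3 (fun p => hs2 _ _) hs3
      (by rw [Fintype.sum_prod_type (α₁ := Fin M)]; simp only [ht2]; rw [ht3, htr, ptraceFst₃_trace])
      (by
        intro t ht
        rw [Fintype.sum_prod_type (α₁ := Fin M)]
        obtain ⟨Y, hY⟩ := hex3 t ht
        rw [← hY, hJ2]
        exact Finset.sum_le_sum fun α _ => hle2 α t ht Y)
    rw [Fintype.sum_prod_type (α₁ := Fin M)] at this
    simp only [hS2, Finset.sum_sub_distrib] at this
    rw [hS3] at this
    rw [Finset.sum_sub_distrib]; linarith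

/-- **Intermediate strengthening of strong subadditivity**:
`S[ρ₁₂₃] − S[ρ₁₂] ≤ ∑_{α : n^α>0} n^α (S[ρ₂₃^α] − S[ρ₂^α]) ≤ S[ρ₂₃] − S[ρ₂]`. -/
theorem intermediate_strong_subadditivity
    {n₁ n₂ n₃ : Type*} [Fintype n₁] [Fintype n₂] [Fintype n₃]
    [DecidableEq n₁] [DecidableEq n₂] [DecidableEq n₃] {M : ℕ}
    (ρ : Matrix ((n₁ × n₂) × n₃) ((n₁ × n₂) × n₃) ℂ)
    (hρ : ρ.PosSemidef) (hρtr : ρ.trace = 1)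
    (k : Fin M → Matrix n₁ n₁ ℂ)
    (hk : ∑ α, (k α)ᴴ * k α = 1)
    (n : Fin M → ℝ)
    (hn : ∀ α, n α =
      ((((k α ⊗ₖ (1 : Matrix n₂ n₂ ℂ)) ⊗ₖ (1 : Matrix n₃ n₃ ℂ)) * ρ *
        (((k α)ᴴ ⊗ₖ (1 : Matrix n₂ n₂ ℂ)) ⊗ₖ (1 : Matrix n₃ n₃ ℂ))).trace).re)
    (ρ23 : Fin M → Matrix (n₂ × n₃) (n₂ × n₃) ℂ)
    (hρ23 : ∀ α, 0 < n α → ρ23 α = ((n α : ℂ))⁻¹ •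
      ptraceFst₃ (((k α ⊗ₖ (1 : Matrix n₂ n₂ ℂ)) ⊗ₖ (1 : Matrix n₃ n₃ ℂ)) * ρ *
        (((k α)ᴴ ⊗ₖ (1 : Matrix n₂ n₂ ℂ)) ⊗ₖ (1 : Matrix n₃ n₃ ℂ))))
    (ρ2 : Fin M → Matrix n₂ n₂ ℂ)
    (hρ2 : ∀ α, 0 < n α → ρ2 α = ptraceSnd (ρ23 α)) :
    entropy ρ - entropy (ptraceSnd ρ) ≤
      (∑ α ∈ Finset.univ.filter (fun α => 0 < n α),
        n α * (entropy (ρ23 α) - entropy (ρ2 α)))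
    ∧ (∑ α ∈ Finset.univ.filter (fun α => 0 < n α),
        n α * (entropy (ρ23 α) - entropy (ρ2 α))) ≤
      entropy (ptraceFst₃ ρ) - entropy (ptraceSnd (ptraceFst₃ ρ)) := by
  have hKe : ∀ α, ((k α ⊗ₖ (1 : Matrix n₂ n₂ ℂ)) ⊗ₖ (1 : Matrix n₃ n₃ ℂ)) * ρ *
        (((k α)ᴴ ⊗ₖ (1 : Matrix n₂ n₂ ℂ)) ⊗ₖ (1 : Matrix n₃ n₃ ℂ)) =
        KK n₂ n₃ (k α) * ρ * (KK n₂ n₃ (k α))ᴴ := fun α => by rw [← KK_conj]; rfl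
  simp only [hKe] at hn hρ23
  set σ : Fin M → Matrix (n₂ × n₃) (n₂ × n₃) ℂ :=
    fun α => ptraceFst₃ (KK n₂ n₃ (k α) * ρ * (KK n₂ n₃ (k α))ᴴ) with hσ
  have hσp : ∀ α, (σ α).PosSemidef := fun α => ptraceFst₃_psd (hρ.mul_mul_conjTranspose_same _)
  have hnt : ∀ α, (n α : ℂ) = (σ α).trace := by
    intro α
    rw [hn, ← ptraceFst₃_trace]
    have := (hσp α).trace_nonneg
    exact (Complex.eq_re_of_ofReal_le (r := 0) (by simpa using this)).symm
  have hsum : (∑ α ∈ Finset.univ.filter (fun α => 0 < n α),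
        n α * (entropy (ρ23 α) - entropy (ρ2 α))) =
        ∑ α, (entropy (σ α) - entropy (ptraceSnd (σ α))) := by
    rw [Finset.sum_filter]
    refine Finset.sum_congr rfl fun α _ => ?_
    split_ifs with h
    · have hne : (n α : ℂ) ≠ 0 := by exact_mod_cast h.ne'
      have e : σ α = (n α : ℂ) • ρ23 α := by
        rw [hρ23 α h, smul_smul, mul_inv_cancel₀ hne, one_smul]
      have hp : (ρ23 α).PosSemidef := by
        rw [hρ23 α h]
        refine (hσp α).smul ?_
        rw [← Complex.ofReal_inv]
        exact_mod_cast (inv_pos.2 h).le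
      have e2 : ptraceSnd (σ α) = (n α : ℂ) • ρ2 α := by
        rw [hρ2 α h, e]
        ext i j
        simp [ptraceSnd, Finset.mul_sum]
      have hp2 : (ρ2 α).PosSemidef := by rw [hρ2 α h]; exact ptraceSnd_psd hp
      have htr : (ρ2 α).trace = (ρ23 α).trace := by
        rw [hρ2 α h]; simp [trace, ptraceSnd, Fintype.sum_prod_type]
      rw [e2, e, entropy_smul hp, entropy_smul hp2, htr]
      ring
    · have h0 : n α = 0 := by
        have := (hσp α).trace_nonneg
        rw [← hnt] at this
        have : 0 ≤ n α := by exact_mod_cast this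
        linarith
      have : σ α = 0 := by
        rw [← (hσp α).trace_eq_zero_iff, ← hnt, h0]; simp
      have e2 : ptraceSnd (σ α) = 0 := by
        rw [this]; ext i j; simp [ptraceSnd]
      have z := entropy_smul (hσp α) 0
      have z2 := entropy_smul (ptraceSnd_psd (hσp α)) 0
      simp only [Complex.ofReal_zero, zero_smul, Real.negMulLog_zero, zero_mul, add_zero] at z z2
      rw [e2, this, z, z2]; simp
  rw [hsum]
  exact core ρ hρ k hk σ fun α => rfl
end

section
/- Quantum mutual information bounds classical mutual information (Corollary 5): Let ρ₁₂ be a density matrix on H₁⊗H₂, let P^1,…,P^M be positive semidefinite operators on H₁ with ∑_α P^α = id_{H₁}, and let Q^1,…,Q^N be positive semidefinite operators on H₂ with ∑_β Q^β = id_{H₂}. Define the classical entropies S^cl[ρ₁₂] = ∑_{α,β} φ( Tr[(P^α⊗Q^β) ρ₁₂] ), S^cl[ρ₁] = ∑_α φ( Tr[P^α ρ₁] ), and S^cl[ρ₂] = ∑_β φ( Tr[Q^β ρ₂] ), where φ(x) = −x ln x (with φ(0)=0). Then S[ρ₁] + S[ρ₂] − S[ρ₁₂] ≥ S^cl[ρ₁]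 + S^cl[ρ₂] − S^cl[ρ₁₂]. -/
open Matrix Kronecker Real
open scoped ComplexOrder

theorem scal {ι : Type*} [Fintype ι] (c r s : ι → ℝ) (hr : ∀ i, 0 ≤ r i) (hs : ∀ i, 0 ≤ s i)
    (h0 : ∀ i, s i = 0 → c i * r i = 0)
    (hpos : ∀ t : ℝ, 0 < t → 0 ≤ ∑ i, c i * (r i ^ 2 / (s i + t * r i)))
    (hsum : ∑ i, c i * r i = 0) :
    0 ≤ ∑ i, c i * r i * (Real.log (r i) - Real.log (s i)) := by
  have hcase : ∀ i, c i * r i = 0 ∨ (0 < r i ∧ 0 < s i) := by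
    intro i
    by_cases h : c i * r i = 0
    · exact Or.inl h
    · right
      refine ⟨lt_of_le_of_ne (hr i) ?_, lt_of_le_of_ne (hs i) ?_⟩
      · intro h'; exact h (by rw [← h', mul_zero])
      · intro h'; exact h (h0 i h'.symm)
  have hder : ∀ i, ∀ t : ℝ, 0 ≤ t →
      HasDerivAt (fun t => c i * r i * Real.log (s i + t * r i)) (c i * (r i ^ 2 / (s i + t * r i))) t := by
    intro i t ht
    rcases hcase i with h | ⟨h1, h2⟩
    · have : c i * (r i ^ 2 / (s i + t * r i)) = 0 := by
        rw [pow_two, mul_div_assoc, ← mul_assoc, h, zero_mul]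
      rw [this]
      simp only [h, zero_mul]
      exact hasDerivAt_const _ _
    · have hp : 0 < s i + t * r i := by positivity
      have := ((((hasDerivAt_id t).mul_const (r i)).const_add (s i)).log hp.ne').const_mul (c i * r i)
      refine this.congr_deriv ?_
      simp only [one_mul, id]
      ring
  have hderF : ∀ t : ℝ, 0 ≤ t → HasDerivAt (fun t => ∑ i, c i * r i * Real.log (s i + t * r i))
      (∑ i, c i * (r i ^ 2 / (s i + t * r i))) t := fun t ht =>
    HasDerivAt.fun_sum fun i _ => hder i t ht
  have hmono : MonotoneOn (fun t => ∑ i, c i * r i * Real.log (s i + t * r i)) (Set.Ici 0) := by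
    apply monotoneOn_of_deriv_nonneg (convex_Ici 0)
    · intro t ht; exact (hderF t ht).continuousAt.continuousWithinAt
    · intro t ht
      rw [interior_Ici] at ht
      exact (hderF t (le_of_lt ht)).differentiableAt.differentiableWithinAt
    · intro t ht
      rw [interior_Ici] at ht
      rw [(hderF t (le_of_lt ht)).deriv]
      exact hpos t ht
  have key : ∀ u : ℝ, 0 < u → ∑ i, c i * r i * Real.log (s i)
      ≤ ∑ i, c i * r i * Real.log (s i * u + r i) := by
    intro u hu
    have h1 := hmono (a := 0) (b := u⁻¹) (by simp) (by simpa using hu.le) (by simpa using hu.le)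
    simp only [zero_mul, add_zero] at h1
    have h2 : ∑ i, c i * r i * Real.log (s i + u⁻¹ * r i)
        = ∑ i, (c i * r i * Real.log (s i * u + r i) - c i * r i * Real.log u) := by
      refine Finset.sum_congr rfl fun i _ => ?_
      rcases hcase i with h | ⟨h1, h2⟩
      · simp [h]
      · have : s i + u⁻¹ * r i = (s i * u + r i) / u := by field_simp
        rw [this, Real.log_div (by positivity) hu.ne']
        ring
    rw [h2, Finset.sum_sub_distrib, ← Finset.sum_mul, hsum, zero_mul, sub_zero] at h1
    exact h1
  have hlim : Filter.Tendsto (fun u : ℝ => ∑ i, c i * r i * Real.log (s i * u + r i))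
      (nhdsWithin 0 (Set.Ioi 0)) (nhds (∑ i, c i * r i * Real.log (r i))) := by
    apply tendsto_finsetSum
    intro i _
    rcases hcase i with h | ⟨h1, h2⟩
    · simp [h]
    · have : ContinuousAt (fun u : ℝ => c i * r i * Real.log (s i * u + r i)) 0 := by
        apply ContinuousAt.mul continuousAt_const
        apply ContinuousAt.log
        · fun_prop
        · simp [h1.ne']
      have h3 := this.tendsto
      simp only [mul_zero, zero_add] at h3
      exact h3.mono_left nhdsWithin_le_nhds
  have := ge_of_tendsto hlim (Filter.eventually_of_mem self_mem_nhdsWithin fun u hu => key u hu)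
  simp only [mul_sub, Finset.sum_sub_distrib]
  linarith

theorem marg {A B : Type*} [Fintype A] [Fintype B] (d : A → B → ℝ) (x : A → ℝ) (y : B → ℝ)
    (hd : ∀ a b, 0 ≤ d a b) (hx : ∀ a, ∑ b, d a b = x a) (hy : ∀ b, ∑ a, d a b = y b) :
    (∀ a b, x a * y b = 0 → d a b = 0) ∧
    ∑ a, ∑ b, d a b * Real.log (x a * y b) =
      - (∑ a, Real.negMulLog (x a) + ∑ b, Real.negMulLog (y b)) := by
  have h0 : ∀ a b, x a * y b = 0 → d a b = 0 := by
    intro a b h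
    rcases mul_eq_zero.1 h with h | h
    · rw [← hx] at h
      exact (Finset.sum_eq_zero_iff_of_nonneg (fun b _ => hd a b)).1 h b (Finset.mem_univ _)
    · rw [← hy] at h
      exact (Finset.sum_eq_zero_iff_of_nonneg (fun a _ => hd a b)).1 h a (Finset.mem_univ _)
  refine ⟨h0, ?_⟩
  have : ∀ a b, d a b * Real.log (x a * y b) = d a b * Real.log (x a) + d a b * Real.log (y b) := by
    intro a b
    by_cases h : x a * y b = 0
    · simp [h0 a b h]
    · rw [Real.log_mul (left_ne_zero_of_mul h) (right_ne_zero_of_mul h)]; ring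
  simp only [this, Finset.sum_add_distrib]
  rw [Finset.sum_comm (f := fun a b => d a b * Real.log (y b))]
  simp only [← Finset.sum_mul, hx, hy, Real.negMulLog, neg_mul, Finset.sum_neg_distrib]
  ring

open scoped MatrixOrder in
theorem tr_nonneg_c {n : Type*} [Fintype n] [DecidableEq n] {A B : Matrix n n ℂ}
    (hA : A.PosSemidef) (hB : B.PosSemidef) : 0 ≤ (A * B).trace := by
  obtain ⟨C, rfl⟩ := CStarAlgebra.nonneg_iff_eq_star_mul_self.1 hA.nonneg
  rw [Matrix.star_eq_conjTranspose, Matrix.mul_assoc, Matrix.trace_mul_comm]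
  exact (hB.mul_mul_conjTranspose_same C).trace_nonneg

theorem tr_nonneg {n : Type*} [Fintype n] [DecidableEq n] {A B : Matrix n n ℂ}
    (hA : A.PosSemidef) (hB : B.PosSemidef) : 0 ≤ (A * B).trace.re :=
  (Complex.le_def.1 (tr_nonneg_c hA hB)).1

theorem tr_diag {n m : Type*} [Fintype n] [DecidableEq n] [Fintype m] (r : n → ℝ)
    (Y W : Matrix n m ℂ) :
    (Matrix.diagonal (fun i => (r i : ℂ)) * (Y * Wᴴ)).trace.re
      = ∑ i, ∑ j, r i * (Y i j * star (W i j)).re := by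
  simp only [Matrix.trace, Matrix.diag_apply, Matrix.diagonal_mul, Complex.re_sum,
    Complex.re_ofReal_mul]
  simp only [Matrix.mul_apply, Complex.re_sum, Matrix.conjTranspose_apply, Finset.mul_sum]

theorem quad {n : Type*} [Fintype n] [DecidableEq n] (r s : n → ℝ) (hr : ∀ i, 0 ≤ r i)
    (hs : ∀ i, 0 ≤ s i) (U V X : Matrix n n ℂ) (hU : U * Uᴴ = 1) (hV : V * Vᴴ = 1)
    (hX : Xᴴ = X) (t : ℝ) (ht : 0 < t) :
    2 * ((U * Matrix.diagonal (fun i => (r i : ℂ)) * Uᴴ) * X).trace.re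
      - ((V * Matrix.diagonal (fun i => (s i : ℂ)) * Vᴴ) * (X * X)).trace.re
      - t * ((U * Matrix.diagonal (fun i => (r i : ℂ)) * Uᴴ) * (X * X)).trace.re
    ≤ ∑ i, ∑ j, Complex.normSq ((Uᴴ * V) i j) * (r i ^ 2 / (s j + t * r i)) := by
  have e1 : ((U * Matrix.diagonal (fun i => (r i : ℂ)) * Uᴴ) * X).trace
      = (Matrix.diagonal (fun i => (r i : ℂ)) * ((Uᴴ * X * V) * (Uᴴ * V)ᴴ)).trace := by
    have : (Uᴴ * X * V) * (Uᴴ * V)ᴴ = Uᴴ * X * U := by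
      rw [Matrix.conjTranspose_mul, Matrix.conjTranspose_conjTranspose, ← Matrix.mul_assoc,
        Matrix.mul_assoc _ V, hV, Matrix.mul_one]
    rw [this, Matrix.mul_assoc, Matrix.mul_assoc, Matrix.trace_mul_comm]
    simp only [Matrix.mul_assoc]
  have e2 : ((V * Matrix.diagonal (fun i => (s i : ℂ)) * Vᴴ) * (X * X)).trace
      = (Matrix.diagonal (fun i => (s i : ℂ)) * ((Uᴴ * X * V)ᴴ * (Uᴴ * X * V)ᴴᴴ)).trace := by
    have : (Uᴴ * X * V)ᴴ * (Uᴴ * X * V)ᴴᴴ = Vᴴ * (X * X) * V := by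
      simp only [Matrix.conjTranspose_mul, Matrix.conjTranspose_conjTranspose, hX]
      calc _ = Vᴴ * (X * (U * Uᴴ) * X) * V := by simp only [Matrix.mul_assoc]
        _ = _ := by rw [hU, Matrix.mul_one]
    rw [this, Matrix.mul_assoc, Matrix.mul_assoc, Matrix.trace_mul_comm]
    simp only [Matrix.mul_assoc]
  have e3 : ((U * Matrix.diagonal (fun i => (r i : ℂ)) * Uᴴ) * (X * X)).trace
      = (Matrix.diagonal (fun i => (r i : ℂ)) * ((Uᴴ * X * V) * (Uᴴ * X * V)ᴴ)).trace := by
    have : (Uᴴ * X * V) * (Uᴴ * X * V)ᴴ = Uᴴ * (X * X) * U := by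
      simp only [Matrix.conjTranspose_mul, Matrix.conjTranspose_conjTranspose, hX]
      calc _ = Uᴴ * (X * (V * Vᴴ) * X) * U := by simp only [Matrix.mul_assoc]
        _ = _ := by rw [hV, Matrix.mul_one]
    rw [this, Matrix.mul_assoc, Matrix.mul_assoc, Matrix.trace_mul_comm]
    simp only [Matrix.mul_assoc]
  rw [e1, e2, e3, tr_diag, tr_diag, tr_diag]
  generalize Uᴴ * X * V = Y
  generalize Uᴴ * V = W
  rw [Finset.sum_comm (f := fun i j => s i * (Yᴴ i j * star (Yᴴ i j)).re)]
  simp only [Finset.mul_sum, ← Finset.sum_sub_distrib]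
  refine Finset.sum_le_sum fun i _ => Finset.sum_le_sum fun j _ => ?_
  simp only [Matrix.conjTranspose_apply, Complex.star_def, Complex.conj_re, Complex.conj_im,
    Complex.mul_re, Complex.normSq_apply]
  generalize (Y i j).re = a
  generalize (Y i j).im = b
  generalize (W i j).re = c
  generalize (W i j).im = d
  have h1 := hr i
  have h2 := hs j
  have h3 : 0 ≤ t * r i := by positivity
  rcases eq_or_lt_of_le (add_nonneg h2 h3) with h | h
  · have h4 : t * r i = 0 := by linarith
    have h5 : s j = 0 := by linarith
    have h6 : r i = 0 := by rcases mul_eq_zero.1 h4 with h | h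
                            · exact absurd h ht.ne'
                            · exact h
    simp [h5, h6]
  · rw [← mul_div_assoc, le_div_iff₀ h]
    nlinarith [sq_nonneg ((s j + t * r i) * a - r i * c), sq_nonneg ((s j + t * r i) * b - r i * d)]

theorem jens {n K : Type*} [Fintype n] [DecidableEq n] [Fintype K] (E : K → Matrix n n ℂ)
    (hE : ∀ k, (E k).PosSemidef) (hsum : ∑ k, E k = 1) (c : K → ℝ) (σ : Matrix n n ℂ)
    (hσ : σ.PosSemidef) :
    (σ * ((∑ k, (c k : ℂ) • E k) * (∑ k, (c k : ℂ) • E k))).trace.re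
      ≤ ∑ k, c k ^ 2 * (σ * E k).trace.re := by
  set X := ∑ k, (c k : ℂ) • E k with hX
  have hXH : Xᴴ = X := by
    rw [hX, Matrix.conjTranspose_sum]
    refine Finset.sum_congr rfl fun k _ => ?_
    rw [Matrix.conjTranspose_smul, (hE k).1.eq]; simp
  have id1 : ∑ k, ((c k : ℂ) • (1 : Matrix n n ℂ) - X) * E k * ((c k : ℂ) • (1 : Matrix n n ℂ) - X)ᴴ
      = ∑ k, ((c k : ℂ) ^ 2) • E k - X * X := by
    have : ∀ k, ((c k : ℂ) • (1 : Matrix n n ℂ) - X) * E k * ((c k : ℂ) • (1 : Matrix n n ℂ) - X)ᴴ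
        = ((c k : ℂ) ^ 2) • E k - ((c k : ℂ) • E k) * X - X * ((c k : ℂ) • E k) + X * E k * X := by
      intro k
      rw [Matrix.conjTranspose_sub, hXH, Matrix.conjTranspose_smul]
      simp only [sub_mul, mul_sub, Matrix.smul_mul, Matrix.mul_smul, Matrix.one_mul, Matrix.mul_one,
        Matrix.conjTranspose_one, Complex.star_def, Complex.conj_ofReal, smul_smul, pow_two]
      abel
    simp only [this, Finset.sum_add_distrib, Finset.sum_sub_distrib, ← Finset.sum_mul,
      ← Finset.mul_sum, ← hX, hsum]
    simp
  have hp : (∑ k, ((c k : ℂ) ^ 2) • E k - X * X).PosSemidef := by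
    rw [← id1]
    exact Matrix.posSemidef_sum _ fun k _ => (hE k).mul_mul_conjTranspose_same _
  have := tr_nonneg hσ hp
  rw [mul_sub, Matrix.trace_sub, Complex.sub_re, Finset.mul_sum, Matrix.trace_sum, Complex.re_sum] at this
  have h2 : ∀ k, (σ * ((c k : ℂ) ^ 2) • E k).trace.re = c k ^ 2 * (σ * E k).trace.re := by
    intro k
    rw [Matrix.mul_smul, Matrix.trace_smul, smul_eq_mul, ← Complex.ofReal_pow, Complex.re_ofReal_mul]
  simp only [h2] at this
  linarith

theorem measured {n K : Type*} [Fintype n] [DecidableEq n] [Fintype K] (r s : n → ℝ)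
    (hr : ∀ i, 0 ≤ r i) (hs : ∀ i, 0 ≤ s i) (U V ρ σ : Matrix n n ℂ)
    (hU : U * Uᴴ = 1) (hV : V * Vᴴ = 1)
    (hρU : ρ = U * Matrix.diagonal (fun i => (r i : ℂ)) * Uᴴ)
    (hσV : σ = V * Matrix.diagonal (fun i => (s i : ℂ)) * Vᴴ)
    (hρ : ρ.PosSemidef) (hσ : σ.PosSemidef)
    (E : K → Matrix n n ℂ) (hE : ∀ k, (E k).PosSemidef) (hsum : ∑ k, E k = 1) (p q : K → ℝ)
    (hp : ∀ k, (ρ * E k).trace.re = p k) (hq : ∀ k, (σ * E k).trace.re = q k)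
    (hpq : ∀ k, q k = 0 → p k = 0)
    (hd : ∀ i j, s j = 0 → Complex.normSq ((Uᴴ * V) i j) * r i = 0) :
    ∑ k, p k * (Real.log (p k) - Real.log (q k)) ≤
      ∑ i, ∑ j, Complex.normSq ((Uᴴ * V) i j) * r i * (Real.log (r i) - Real.log (s j)) := by
  have hp0 : ∀ k, 0 ≤ p k := fun k => by rw [← hp]; exact tr_nonneg hρ (hE k)
  have hq0 : ∀ k, 0 ≤ q k := fun k => by rw [← hq]; exact tr_nonneg hσ (hE k)
  have main := scal (ι := (n × n) ⊕ K)
    (Sum.elim (fun x => Complex.normSq ((Uᴴ * V) x.1 x.2)) (fun _ => -1))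
    (Sum.elim (fun x => r x.1) p) (Sum.elim (fun x => s x.2) q)
    (by rintro (x | k); exacts [hr _, hp0 _]) (by rintro (x | k); exacts [hs _, hq0 _])
    (by rintro (x | k) h
        · exact hd x.1 x.2 h
        · simpa using hpq k h)
    (by
      intro t ht
      simp only [Fintype.sum_sum_type, Sum.elim_inl, Sum.elim_inr, Fintype.sum_prod_type]
      have h1 := quad r s hr hs U V (∑ k, ((p k / (q k + t * p k) : ℝ) : ℂ) • E k) hU hV
        (by
          rw [Matrix.conjTranspose_sum]
          refine Finset.sum_congr rfl fun k _ => ?_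
          rw [Matrix.conjTranspose_smul, (hE k).1.eq]; simp) t ht
      rw [← hρU, ← hσV] at h1
      have h2 := jens E hE hsum (fun k => p k / (q k + t * p k)) ρ hρ
      have h3 := jens E hE hsum (fun k => p k / (q k + t * p k)) σ hσ
      have h4 : (ρ * (∑ k, ((p k / (q k + t * p k) : ℝ) : ℂ) • E k)).trace.re
          = ∑ k, p k / (q k + t * p k) * p k := by
        rw [Finset.mul_sum, Matrix.trace_sum, Complex.re_sum]
        refine Finset.sum_congr rfl fun k _ => ?_
        rw [Matrix.mul_smul, Matrix.trace_smul, smul_eq_mul, Complex.re_ofReal_mul, hp]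
      simp only [hp, hq] at h2 h3
      rw [h4] at h1
      have h5 : ∑ k, p k ^ 2 / (q k + t * p k) = 2 * ∑ k, p k / (q k + t * p k) * p k
          - ∑ k, (p k / (q k + t * p k)) ^ 2 * q k
          - t * ∑ k, (p k / (q k + t * p k)) ^ 2 * p k := by
        simp only [Finset.mul_sum, ← Finset.sum_sub_distrib]
        refine Finset.sum_congr rfl fun k _ => ?_
        by_cases h : q k + t * p k = 0
        · simp [h]
        · have e : p k ^ 2 / (q k + t * p k)
              = (p k / (q k + t * p k)) ^ 2 * (q k + t * p k) := by field_simp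
          have e' : p k / (q k + t * p k) * p k
              = (p k / (q k + t * p k)) ^ 2 * (q k + t * p k) := by field_simp
          rw [e, e']; ring
      have h6 := mul_le_mul_of_nonneg_left h2 ht.le
      simp only [neg_mul, one_mul, Finset.sum_neg_distrib]
      linarith)
    (by
      simp only [Fintype.sum_sum_type, Sum.elim_inl, Sum.elim_inr, Fintype.sum_prod_type]
      have h1 : ∑ k, p k = ρ.trace.re := by
        simp only [← hp]
        rw [← Complex.re_sum, ← Matrix.trace_sum, ← Finset.mul_sum, hsum, mul_one]
      have h2 : ρ.trace.re = ∑ i, ∑ j, Complex.normSq ((Uᴴ * V) i j) * r i := by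
        have : ρ.trace = (Matrix.diagonal (fun i => (r i : ℂ)) * ((Uᴴ * V) * (Uᴴ * V)ᴴ)).trace := by
          rw [Matrix.conjTranspose_mul, Matrix.conjTranspose_conjTranspose, ← Matrix.mul_assoc (Uᴴ * V),
            Matrix.mul_assoc _ V, hV, Matrix.mul_one, hρU, Matrix.mul_assoc, Matrix.trace_mul_comm]
          simp only [Matrix.mul_assoc]
        rw [this, tr_diag]
        refine Finset.sum_congr rfl fun i _ => Finset.sum_congr rfl fun j _ => ?_
        rw [Complex.star_def, Complex.mul_conj, Complex.ofReal_re, mul_comm]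
      simp only [neg_mul, one_mul, Finset.sum_neg_distrib]
      linarith)
  simp only [Fintype.sum_sum_type, Sum.elim_inl, Sum.elim_inr, Fintype.sum_prod_type, neg_mul,
    one_mul, Finset.sum_neg_distrib] at main
  linarith

theorem ptraceSnd_psd_s4 {m k : Type*} [Fintype m] [Fintype k] {ρ : Matrix (m × k) (m × k) ℂ}
    (h : ρ.PosSemidef) : (ptraceSnd ρ).PosSemidef := by
  have : ptraceSnd ρ = ∑ a : k, ρ.submatrix (fun i => (i, a)) (fun i => (i, a)) := by
    ext i j; simp [ptraceSnd, Matrix.sum_apply]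
  rw [this]
  exact Matrix.posSemidef_sum _ fun a _ => h.submatrix _

theorem ptraceFst_psd {m k : Type*} [Fintype m] [Fintype k] {ρ : Matrix (m × k) (m × k) ℂ}
    (h : ρ.PosSemidef) : (ptraceFst ρ).PosSemidef := by
  have : ptraceFst ρ = ∑ a : m, ρ.submatrix (fun i => (a, i)) (fun i => (a, i)) := by
    ext i j; simp [ptraceFst, Matrix.sum_apply]
  rw [this]
  exact Matrix.posSemidef_sum _ fun a _ => h.submatrix _

theorem tr_snd {m k : Type*} [Fintype m] [Fintype k] [DecidableEq k]
    (ρ : Matrix (m × k) (m × k) ℂ) (A : Matrix m m ℂ) :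
    ((A ⊗ₖ (1 : Matrix k k ℂ)) * ρ).trace = (A * ptraceSnd ρ).trace := by
  simp only [Matrix.trace, Matrix.diag_apply, Matrix.mul_apply, Fintype.sum_prod_type,
    Matrix.kroneckerMap_apply, ptraceSnd, Matrix.of_apply, Matrix.one_apply, mul_ite, mul_one,
    mul_zero, ite_mul, zero_mul, Finset.sum_ite_eq, Finset.mem_univ, if_true, Finset.mul_sum]
  refine Finset.sum_congr rfl fun i _ => ?_
  rw [Finset.sum_comm]

theorem tr_fst {m k : Type*} [Fintype m] [Fintype k] [DecidableEq m]
    (ρ : Matrix (m × k) (m × k) ℂ) (B : Matrix k k ℂ) :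
    (((1 : Matrix m m ℂ) ⊗ₖ B) * ρ).trace = (B * ptraceFst ρ).trace := by
  simp only [Matrix.trace, Matrix.diag_apply, Matrix.mul_apply, Fintype.sum_prod_type,
    Matrix.kroneckerMap_apply, ptraceFst, Matrix.of_apply, Matrix.one_apply, ite_mul, one_mul,
    zero_mul, Finset.sum_ite_irrel, Finset.sum_const_zero, Finset.sum_ite_eq, Finset.mem_univ,
    if_true, Finset.mul_sum]
  rw [Finset.sum_comm]
  refine Finset.sum_congr rfl fun i _ => ?_
  rw [Finset.sum_comm]

theorem kron_sum {m k K : Type*} [Fintype K] (A : Matrix m m ℂ) (Q : K → Matrix k k ℂ) :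
    ∑ b, (A ⊗ₖ Q b) = A ⊗ₖ (∑ b, Q b) := by
  ext i j
  simp [Matrix.sum_apply, Finset.mul_sum]

theorem sum_kron {m k K : Type*} [Fintype K] (A : K → Matrix m m ℂ) (B : Matrix k k ℂ) :
    ∑ b, (A b ⊗ₖ B) = (∑ b, A b) ⊗ₖ B := by
  ext i j
  simp [Matrix.sum_apply, Finset.sum_mul]

theorem povm_marg {m k A B : Type*} [Fintype m] [Fintype k] [DecidableEq m] [DecidableEq k]
    [Fintype A] [Fintype B] (ρ : Matrix (m × k) (m × k) ℂ) (hρ : ρ.PosSemidef)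
    (P : A → Matrix m m ℂ) (hP : ∀ a, (P a).PosSemidef) (hPs : ∑ a, P a = 1)
    (Q : B → Matrix k k ℂ) (hQ : ∀ a, (Q a).PosSemidef) (hQs : ∑ a, Q a = 1)
    (x : A → ℝ) (y : B → ℝ) (hx : ∀ a, (P a * ptraceSnd ρ).trace.re = x a)
    (hy : ∀ b, (Q b * ptraceFst ρ).trace.re = y b) :
    (∀ a b, x a * y b = 0 → (((P a ⊗ₖ Q b) * ρ).trace).re = 0) ∧
    ∑ a, ∑ b, (((P a ⊗ₖ Q b) * ρ).trace).re * Real.log (x a * y b) =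
      - (∑ a, Real.negMulLog (x a) + ∑ b, Real.negMulLog (y b)) := by
  refine marg (fun a b => (((P a ⊗ₖ Q b) * ρ).trace).re) x y
    (fun a b => tr_nonneg ((hP a).kronecker (hQ b)) hρ) (fun a => ?_) (fun b => ?_)
  · rw [← hx, ← tr_snd, ← Complex.re_sum, ← Matrix.trace_sum, ← Finset.sum_mul, kron_sum, hQs]
  · rw [← hy, ← tr_fst, ← Complex.re_sum, ← Matrix.trace_sum, ← Finset.sum_mul, sum_kron, hPs]

theorem spec {n : Type*} [Fintype n] [DecidableEq n] {A : Matrix n n ℂ} (hA : A.IsHermitian) :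
    ∃ U : Matrix n n ℂ, U * Uᴴ = 1 ∧ Uᴴ * U = 1 ∧
      A = U * Matrix.diagonal (fun i => (hA.eigenvalues i : ℂ)) * Uᴴ := by
  refine ⟨hA.eigenvectorUnitary, ?_, ?_, ?_⟩
  · exact Unitary.mul_star_self_of_mem hA.eigenvectorUnitary.2
  · exact Unitary.star_mul_self_of_mem hA.eigenvectorUnitary.2
  · conv_lhs => rw [hA.spectral_theorem]
    rfl

theorem proj_psd {n : Type*} [Fintype n] [DecidableEq n] (V : Matrix n n ℂ) (a : n) :
    (V * Matrix.single a a 1 * Vᴴ).PosSemidef := by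
  have : (Matrix.single a a (1 : ℂ)).PosSemidef := by
    have : Matrix.single a a (1 : ℂ) = Matrix.diagonal (Pi.single a 1) := by
      rw [Matrix.diagonal_single]
    rw [this]
    refine Matrix.PosSemidef.diagonal ?_
    intro i
    by_cases h : i = a
    · subst h; simp
    · simp [Pi.single_eq_of_ne h]
  exact this.mul_mul_conjTranspose_same V

theorem proj_sum {n : Type*} [Fintype n] [DecidableEq n] (V : Matrix n n ℂ) (hV : V * Vᴴ = 1) :
    ∑ a, (V * Matrix.single a a (1 : ℂ) * Vᴴ) = 1 := by
  rw [← Finset.sum_mul, ← Finset.mul_sum]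
  have : ∑ a : n, Matrix.single a a (1 : ℂ) = 1 := by
    ext i j
    by_cases h : i = j
    · subst h; simp [Matrix.sum_apply, Matrix.single_apply]
    · simp only [Matrix.sum_apply, Matrix.single_apply, Matrix.one_apply_ne h]
      refine Finset.sum_eq_zero fun a _ => if_neg ?_
      rintro ⟨rfl, h'⟩; exact h h'
  rw [this, mul_one, hV]

theorem proj_tr {n : Type*} [Fintype n] [DecidableEq n] (U V : Matrix n n ℂ) (r : n → ℝ) (a : n) :
    (V * Matrix.single a a (1 : ℂ) * Vᴴ * (U * Matrix.diagonal (fun i => (r i : ℂ)) * Uᴴ)).trace.re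
      = ∑ i, Complex.normSq ((Uᴴ * V) i a) * r i := by
  have : (V * Matrix.single a a (1 : ℂ) * Vᴴ *
      (U * Matrix.diagonal (fun i => (r i : ℂ)) * Uᴴ)).trace
      = (Matrix.diagonal (fun i => (r i : ℂ)) *
        (((Uᴴ * V) * Matrix.single a a (1 : ℂ)) * (Uᴴ * V)ᴴ)).trace := by
    rw [Matrix.conjTranspose_mul, Matrix.conjTranspose_conjTranspose]
    rw [Matrix.trace_mul_comm, Matrix.mul_assoc, Matrix.mul_assoc, Matrix.trace_mul_comm]
    simp only [Matrix.mul_assoc]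
  rw [this, tr_diag]
  refine Finset.sum_congr rfl fun i _ => ?_
  rw [Finset.sum_eq_single a]
  · rw [Matrix.mul_single_apply_same, mul_one, Complex.star_def, Complex.mul_conj,
      Complex.ofReal_re, mul_comm]
  · intro j _ hj
    rw [Matrix.mul_single_apply_of_ne _ _ _ _ _ hj]; simp
  · simp

theorem proj_tr_self {n : Type*} [Fintype n] [DecidableEq n] (V : Matrix n n ℂ) (hV : Vᴴ * V = 1)
    (r : n → ℝ) (a : n) :
    (V * Matrix.single a a (1 : ℂ) * Vᴴ * (V * Matrix.diagonal (fun i => (r i : ℂ)) * Vᴴ)).trace.re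
      = r a := by
  rw [proj_tr, hV, Finset.sum_eq_single a]
  · simp
  · intro j _ hj; simp [Matrix.one_apply_ne hj]
  · simp

/-- **Quantum mutual information bounds classical mutual information**
(Corollary 5): `S[ρ₁] + S[ρ₂] − S[ρ₁₂] ≥ S^cl[ρ₁] + S^cl[ρ₂] − S^cl[ρ₁₂]`. -/
theorem quantum_mutual_info_ge_classical_mutual_info
    {n₁ n₂ : Type*} [Fintype n₁] [Fintype n₂]
    [DecidableEq n₁] [DecidableEq n₂] {M N : ℕ}
    (ρ : Matrix (n₁ × n₂) (n₁ × n₂) ℂ)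
    (hρ : ρ.PosSemidef) (hρtr : ρ.trace = 1)
    (P : Fin M → Matrix n₁ n₁ ℂ) (hP : ∀ α, (P α).PosSemidef)
    (hPsum : ∑ α, P α = 1)
    (Q : Fin N → Matrix n₂ n₂ ℂ) (hQ : ∀ β, (Q β).PosSemidef)
    (hQsum : ∑ β, Q β = 1) :
    (∑ α, Real.negMulLog (((P α * ptraceSnd ρ).trace).re))
      + (∑ β, Real.negMulLog (((Q β * ptraceFst ρ).trace).re))
      - (∑ α, ∑ β, Real.negMulLog ((((P α ⊗ₖ Q β) * ρ).trace).re))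
    ≤ entropy (ptraceSnd ρ) + entropy (ptraceFst ρ) - entropy ρ := by
  have hρ1 := ptraceSnd_psd_s4 hρ
  have hρ2 := ptraceFst_psd hρ
  obtain ⟨U, hU, hU', hUe⟩ := spec hρ.1
  obtain ⟨V, hV, hV', hVe⟩ := spec hρ1.1
  obtain ⟨W, hW, hW', hWe⟩ := spec hρ2.1
  have hr := hρ.eigenvalues_nonneg
  have hx := hρ1.eigenvalues_nonneg
  have hy := hρ2.eigenvalues_nonneg
  simp only [entropy, dif_pos hρ.1, dif_pos hρ1.1, dif_pos hρ2.1]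
  set r := hρ.1.eigenvalues
  set x := hρ1.1.eigenvalues
  set y := hρ2.1.eigenvalues
  have cl := povm_marg ρ hρ P hP hPsum Q hQ hQsum _ _ (fun _ => rfl) (fun _ => rfl)
  have qu := povm_marg ρ hρ (fun a => V * Matrix.single a a (1 : ℂ) * Vᴴ) (proj_psd V)
    (proj_sum V hV) (fun a => W * Matrix.single a a (1 : ℂ) * Wᴴ) (proj_psd W)
    (proj_sum W hW) x y (fun a => by rw [hVe]; exact proj_tr_self V hV' x a)
    (fun a => by rw [hWe]; exact proj_tr_self W hW' y a)
  have hVW : (V ⊗ₖ W) * (V ⊗ₖ W)ᴴ = 1 := by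
    rw [Matrix.conjTranspose_kronecker, ← Matrix.mul_kronecker_mul, hV, hW, Matrix.one_kronecker_one]
  have hpr : ∀ a b, ((((V * Matrix.single a a (1 : ℂ) * Vᴴ) ⊗ₖ (W * Matrix.single b b (1 : ℂ) * Wᴴ))
      * ρ).trace).re = ∑ i, Complex.normSq ((Uᴴ * (V ⊗ₖ W)) i (a, b)) * r i := by
    intro a b
    rw [Matrix.mul_kronecker_mul, Matrix.mul_kronecker_mul, Matrix.single_kronecker_single,
      ← Matrix.conjTranspose_kronecker, mul_one, hUe]
    exact proj_tr U (V ⊗ₖ W) r (a, b)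
  simp only [hpr] at qu
  have hσ : ptraceSnd ρ ⊗ₖ ptraceFst ρ = (V ⊗ₖ W) *
      Matrix.diagonal (fun j => ((x j.1 * y j.2 : ℝ) : ℂ)) * (V ⊗ₖ W)ᴴ := by
    conv_lhs => rw [hVe, hWe]
    rw [Matrix.mul_kronecker_mul, Matrix.mul_kronecker_mul, Matrix.diagonal_kronecker_diagonal,
      ← Matrix.conjTranspose_kronecker]
    simp only [Complex.ofReal_mul]
  have hzero : ∀ i (j : n₁ × n₂), x j.1 * y j.2 = 0 →
      Complex.normSq ((Uᴴ * (V ⊗ₖ W)) i j) * r i = 0 := by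
    intro i j h
    exact (Finset.sum_eq_zero_iff_of_nonneg
      (fun i _ => mul_nonneg (Complex.normSq_nonneg _) (hr i))).1 (qu.1 j.1 j.2 h) i (Finset.mem_univ _)
  have main := measured (K := Fin M × Fin N) r (fun j => x j.1 * y j.2) hr
    (fun j => mul_nonneg (hx _) (hy _)) U (V ⊗ₖ W) ρ (ptraceSnd ρ ⊗ₖ ptraceFst ρ) hU hVW hUe hσ hρ
    (hρ1.kronecker hρ2) (fun k => P k.1 ⊗ₖ Q k.2) (fun k => (hP _).kronecker (hQ _))
    (by simp only [Fintype.sum_prod_type, kron_sum, hQsum, sum_kron, hPsum, Matrix.one_kronecker_one])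
    (fun k => (((P k.1 ⊗ₖ Q k.2) * ρ).trace).re)
    (fun k => ((P k.1 * ptraceSnd ρ).trace).re * ((Q k.2 * ptraceFst ρ).trace).re)
    (fun k => by rw [Matrix.trace_mul_comm])
    (fun k => by
      have h1 := (Complex.le_def.1 (tr_nonneg_c (hP k.1) hρ1)).2
      rw [Matrix.trace_mul_comm, ← Matrix.mul_kronecker_mul, Matrix.trace_kronecker, Complex.mul_re,
        ← h1]
      simp)
    (fun k h => cl.1 k.1 k.2 h) hzero
  simp only [mul_sub, Finset.sum_sub_distrib, Fintype.sum_prod_type] at main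
  have m1 : ∑ i, ∑ a, ∑ b, Complex.normSq ((Uᴴ * (V ⊗ₖ W)) i (a, b)) * r i * Real.log (r i)
      = - ∑ i, Real.negMulLog (r i) := by
    have hrow : ∀ i, ∑ j, Complex.normSq ((Uᴴ * (V ⊗ₖ W)) i j) = 1 := by
      intro i
      have h1 : (Uᴴ * (V ⊗ₖ W)) * (Uᴴ * (V ⊗ₖ W))ᴴ = 1 := by
        rw [Matrix.conjTranspose_mul, Matrix.conjTranspose_conjTranspose,
          ← Matrix.mul_assoc (Uᴴ * (V ⊗ₖ W)), Matrix.mul_assoc Uᴴ, hVW, Matrix.mul_one, hU']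
      have h2 := congrArg Complex.re (congrFun (congrFun h1 i) i)
      rw [Matrix.mul_apply, Complex.re_sum, Matrix.one_apply_eq, Complex.one_re] at h2
      rw [← h2]
      refine Finset.sum_congr rfl fun j _ => ?_
      rw [Matrix.conjTranspose_apply, Complex.star_def, Complex.mul_conj, Complex.ofReal_re]
    rw [← Finset.sum_neg_distrib]
    refine Finset.sum_congr rfl fun i _ => ?_
    have h3 := hrow i
    rw [Fintype.sum_prod_type] at h3
    simp only [← Finset.sum_mul, h3, Real.negMulLog]
    ring
  have m2 : ∑ i, ∑ a, ∑ b, Complex.normSq ((Uᴴ * (V ⊗ₖ W)) i (a, b)) * r i * Real.log (x a * y b)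
      = - (∑ a, Real.negMulLog (x a) + ∑ b, Real.negMulLog (y b)) := by
    rw [← qu.2, Finset.sum_comm]
    refine Finset.sum_congr rfl fun a _ => ?_
    rw [Finset.sum_comm]
    refine Finset.sum_congr rfl fun b _ => ?_
    rw [Finset.sum_mul]
  have m3 : ∑ α, ∑ β, (((P α ⊗ₖ Q β) * ρ).trace).re * Real.log ((((P α ⊗ₖ Q β) * ρ).trace).re)
      = - ∑ α, ∑ β, Real.negMulLog ((((P α ⊗ₖ Q β) * ρ).trace).re) := by
    simp only [Real.negMulLog, neg_mul, Finset.sum_neg_distrib, neg_neg]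
  have m4 := cl.2
  have m5 : ∑ i, Real.negMulLog (r i) = ∑ a, ∑ b, Real.negMulLog (r (a, b)) :=
    Fintype.sum_prod_type _
  simp only [Fintype.sum_prod_type] at m1 m2
  linarith
end
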